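/- arXiv:2005.00260 — 2 statements merged into one kernel-verified Lean document; each statement's English description precedes it below -/
import Mathlib

section
/- Call a type A : Type u contractible if Nonempty A and Subsingleton A both hold. Assume Type u is univalent for contractible types: for all contractible A B : Type u, the canonical map (A = B) → (A ≃ B) sending an equality to the cast equivalence is bijective. Let Q : Prop. Then the subtype {A : Type u // Q → (Nonempty A ∧ Subsingleton A)} of Q-contractible types is itself Q-contractible: if Q holds, then this subtype is nonempty and a subsingleton. -/
universe u

/-- **Partial contractibility lemma** (partial-contractibility-lemma): if the
universe `Type u` is univalent for contractible types, then for any proposition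
`Q` the subtype of `Q`-contractible types is itself `Q`-contractible. -/
theorem partial_contractibility
    (hU : ∀ A B : Type u,
      (Nonempty A ∧ Subsingleton A) → (Nonempty B ∧ Subsingleton B) →
        Function.Bijective (fun h : A = B => Equiv.cast h))
    (Q : Prop) :
    Q → (Nonempty {A : Type u // Q → (Nonempty A ∧ Subsingleton A)} ∧
         Subsingleton {A : Type u // Q → (Nonempty A ∧ Subsingleton A)}) := by
  intro q
  refine ⟨⟨⟨PUnit, fun _ => ⟨inferInstance, inferInstance⟩⟩⟩, ⟨?_⟩⟩
  rintro ⟨A, hA⟩ ⟨B, hB⟩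
  obtain ⟨⟨a⟩, hsA⟩ := hA q
  obtain ⟨⟨b⟩, hsB⟩ := hB q
  -- Contractible types are equivalent through their centres, so univalence makes them equal.
  let e : A ≃ B :=
    ⟨fun _ => b, fun _ => a, fun _ => Subsingleton.elim _ _, fun _ => Subsingleton.elim _ _⟩
  obtain ⟨h, -⟩ := (hU A B (hA q) (hB q)).surjective e
  exact Subtype.ext h
end

section
/- Let I : Type, and let (S, Pos) be an I-indexed container: S : I → Type and Pos : ∀ i, S i → I → Type. Let W : I → Type be the indexed W-type of (S, Pos), i.e. the indexed inductive family generated by the single constructor sup : ∀ {i : I} (s : S i), (∀ j : I, Pos i s j → W j) → W i. Define by recursion on the two trees a family of equality codes EqW : ∀ {i₀ i₁ : I}, (i₀ = i₁) → W i₀ → W i₁ → Type, where EqW p (sup s₀ t₀) (sup s₁ t₁) is the type of pairs (p_s, c) with p_s : p ▸ s₀ = s₁ a dependent equality of shapes over p, and c a function assigning to every j : I, m₀ : Pos i₀ s₀ j, m₁ : Pos i₁ s₁ j and dependent equality of m₀ and m₁ over p and p_s an element of EqW rfl (t₀ j m₀) (t₁ j m₁). Then for every p : i₀ = i₁, x₀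 : W i₀ and x₁ : W i₁ there is an equivalence (p ▸ x₀ = x₁) ≃ EqW p x₀ x₁. -/
/-!
Equality is propositional here, so it suffices to see that the type of codes is a subsingleton
which is inhabited exactly when `p ▸ x₀ = x₁`. All three facts go by induction on the first tree.
Codes are unique (`EqW.subsingleton`) because a code pairs a proof of an equality of shapes with
a family of codes between subtrees. Every tree has a reflexivity code (`EqW.refl`), since dependently
equal positions over reflexivity are equal. A code gives an equality (`EqW.decode`): after
eliminating the equality of shapes, evaluating the family of codes at `m₀ = m₁` and applying the
induction hypothesis identifies the subtrees pointwise.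
-/

/-- The indexed W-type of an `I`-indexed container `(S, Pos)`. -/
inductive IW {I : Type} (S : I → Type) (Pos : ∀ i, S i → I → Type) : I → Type where
  | sup : ∀ {i : I} (s : S i), (∀ j : I, Pos i s j → IW S Pos j) → IW S Pos i

/-- Transport of a position along a dependent equality of shapes over an
equality of indices. -/
def posTransport {I : Type} {S : I → Type} (Pos : ∀ i, S i → I → Type)
    {i₀ i₁ : I} (p : i₀ = i₁) {s₀ : S i₀} {s₁ : S i₁} (ps : p ▸ s₀ = s₁)
    {j : I} (m : Pos i₀ s₀ j) : Pos i₁ s₁ j := by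
  cases p; cases ps; exact m

/-- Codes of equalities between elements of the indexed W-type, defined by
recursion on the two trees: a code between `sup s₀ t₀` and `sup s₁ t₁` over
`p : i₀ = i₁` is a dependent equality `ps` of the shapes over `p` together
with a function sending dependently equal positions to codes between the
corresponding subtrees. -/
def EqW {I : Type} {S : I → Type} {Pos : ∀ i, S i → I → Type} :
    ∀ {i₀ i₁ : I}, i₀ = i₁ → IW S Pos i₀ → IW S Pos i₁ → Type
  | i₀, i₁, p, .sup s₀ t₀, .sup s₁ t₁ =>
      PSigma.{0, 1} fun ps : p ▸ s₀ = s₁ =>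
        ∀ (j : I) (m₀ : Pos i₀ s₀ j) (m₁ : Pos i₁ s₁ j),
          posTransport Pos p ps m₀ = m₁ → EqW rfl (t₀ j m₀) (t₁ j m₁)

theorem EqW.subsingleton {I : Type} {S : I → Type} {Pos : ∀ i, S i → I → Type}
    {i₀ : I} (x₀ : IW S Pos i₀) :
    ∀ {i₁ : I} (p : i₀ = i₁) (x₁ : IW S Pos i₁), Subsingleton (EqW p x₀ x₁) := by
  induction x₀ with
  | sup s₀ t₀ ih =>
    rintro i₁ p ⟨s₁, t₁⟩
    rw [EqW]
    constructor
    rintro ⟨ps, c⟩ ⟨ps', c'⟩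
    congr 1
    funext j m₀ m₁ e
    exact (ih j m₀ rfl (t₁ j m₁)).elim _ _

theorem EqW.refl {I : Type} {S : I → Type} {Pos : ∀ i, S i → I → Type}
    {i : I} (x : IW S Pos i) : Nonempty (EqW rfl x x) := by
  induction x with
  | sup s t ih =>
    rw [EqW]
    refine ⟨⟨rfl, fun j m₀ m₁ e => ?_⟩⟩
    -- Over reflexivity, `posTransport` is the identity, so `e` identifies the two positions.
    have e' : m₀ = m₁ := e
    subst e'
    exact (ih j m₀).some

theorem EqW.decode {I : Type} {S : I → Type} {Pos : ∀ i, S i → I → Type}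
    {i : I} (x₀ : IW S Pos i) :
    ∀ x₁ : IW S Pos i, EqW rfl x₀ x₁ → x₀ = x₁ := by
  induction x₀ with
  | sup s₀ t₀ ih =>
    rintro ⟨s₁, t₁⟩ c
    rw [EqW] at c
    obtain ⟨ps, c⟩ := c
    cases ps
    congr 1
    funext j m
    exact ih j m _ (c j m m rfl)

/-- **Equality in indexed W-types** (indexed-W-equality-equiv): dependent
equalities in the indexed W-type over `p : i₀ = i₁` are equivalent to equality
codes. -/
theorem indexed_W_equality_equiv {I : Type} {S : I → Type}
    {Pos : ∀ i, S i → I → Type} {i₀ i₁ : I} (p : i₀ = i₁)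
    (x₀ : IW S Pos i₀) (x₁ : IW S Pos i₁) :
    Nonempty ((p ▸ x₀ = x₁) ≃ EqW p x₀ x₁) := by
  subst p
  have := EqW.subsingleton x₀ rfl x₁
  exact ⟨{
    toFun := fun h => (h ▸ EqW.refl x₀ : Nonempty (EqW rfl x₀ x₁)).some
    invFun := EqW.decode x₀ x₁
    left_inv := fun _ => rfl
    right_inv := fun _ => Subsingleton.elim _ _ }⟩
end
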